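/- Let A = ℂ[X₁, X₂, X₃, …] be the polynomial algebra over ℂ in countably infinitely many variables, and let 𝔭 be a prime ideal of A of finite height. Then the localization A_𝔭 of A at 𝔭 is a regular local ring; in particular, A_𝔭 is Noetherian. -/

import Mathlib

namespace MvPolynomial

variable {σ τ R : Type*} [CommRing R]

lemma isPrime_map_C {P : Ideal R} (hP : P.IsPrime) :
    (P.map (C : R →+* MvPolynomial σ R)).IsPrime := by
  rw [← Ideal.Quotient.isDomain_iff_prime]
  exact (quotientEquivQuotientMvPolynomial (σ := σ) P).symm.toMulEquiv.isDomain _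

lemma isPrime_map_rename {f : σ → τ} (hf : Function.Injective f)
    {P : Ideal (MvPolynomial σ R)} (hP : P.IsPrime) :
    (P.map (rename (R := R) f)).IsPrime := by
  classical
  let e : ((Set.range f)ᶜ : Set τ) ⊕ σ ≃ τ :=
    ((Equiv.sumComm _ _).trans (Equiv.sumCongr (Equiv.ofInjective f hf) (Equiv.refl _))).trans
      (Equiv.Set.sumCompl (Set.range f))
  let g := (sumAlgEquiv R ((Set.range f)ᶜ : Set τ) σ).symm.trans (renameEquiv R e)
  have hg : g.toRingEquiv.toRingHom.comp C = (rename (R := R) f).toRingHom := by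
    ext i <;> simp [g, e]
  have := isPrime_map_C (σ := ((Set.range f)ᶜ : Set τ)) hP
  have h := Ideal.map_isPrime_of_equiv g (I := P.map C)
  have hmap := Ideal.map_map (I := P) C g.toRingEquiv.toRingHom
  rw [hg] at hmap
  exact hmap ▸ h

lemma comap_map_rename {f : σ → τ} (hf : Function.Injective f) (I : Ideal (MvPolynomial σ R)) :
    (I.map (rename (R := R) f)).comap (rename f) = I := by
  refine le_antisymm (fun x hx ↦ ?_) Ideal.le_comap_map
  have h := Ideal.mem_map_of_mem (killCompl (R := R) hf) (Ideal.mem_comap.mp hx)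
  have hid : (I.map (rename (R := R) f)).map (killCompl (R := R) hf) = I := by
    rw [Ideal.map_mapₐ, killCompl_comp_rename]
    exact Ideal.map_id I
  rwa [hid, killCompl_rename_app] at h

lemma height_le_height_map_rename {f : σ → τ} (hf : Function.Injective f)
    (P : Ideal (MvPolynomial σ R)) [hP : P.IsPrime] :
    P.height ≤ (P.map (rename (R := R) f)).height := by
  have := isPrime_map_rename hf hP
  let φ : PrimeSpectrum (MvPolynomial σ R) → PrimeSpectrum (MvPolynomial τ R) :=
    fun Q ↦ ⟨Q.asIdeal.map (rename f), isPrime_map_rename hf Q.isPrime⟩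
  have hφ : StrictMono φ := Monotone.strictMono_of_injective (fun _ _ h ↦ Ideal.map_mono h)
    fun Q₁ Q₂ h ↦ PrimeSpectrum.ext <| by
      rw [← comap_map_rename hf Q₁.asIdeal, ← comap_map_rename hf Q₂.asIdeal,
        show Q₁.asIdeal.map (rename f) = Q₂.asIdeal.map (rename f) from congr_arg (·.asIdeal) h]
  have := Order.height_le_height_apply_of_strictMono φ hφ ⟨P, hP⟩
  rwa [← PrimeSpectrum.height_eq_orderHeight, ← PrimeSpectrum.height_eq_orderHeight] at this

/-- A prime of finite height is extended from finitely many variables. -/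
lemma exists_finset_map_comap_rename_eq {P : Ideal (MvPolynomial σ R)} (hP : P.IsPrime)
    (hfin : P.height ≠ ⊤) :
    ∃ s : Finset σ, (P.comap (rename (R := R) ((↑) : s → σ))).map (rename (↑)) = P := by
  classical
  let Q (s : Finset σ) : Ideal (MvPolynomial σ R) :=
    (P.comap (rename (R := R) ((↑) : s → σ))).map (rename (↑))
  have hQ (s) : (Q s).IsPrime := isPrime_map_rename Subtype.val_injective (hP.comap _)
  have hQP (s) : Q s ≤ P := Ideal.map_comap_le
  have hmono {s t : Finset σ} (h : s ⊆ t) : Q s ≤ Q t := by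
    refine Ideal.map_le_iff_le_comap.mpr fun x hx ↦ ?_
    have hxt : rename (R := R) ((↑) : t → σ) (rename (fun i : s ↦ (⟨i, h i.2⟩ : t)) x) =
        rename (↑) x := by
      rw [rename_rename]; rfl
    rw [Ideal.mem_comap, ← hxt]
    refine Ideal.mem_map_of_mem _ ?_
    rwa [Ideal.mem_comap, hxt]
  have hne (s) : (Q s).height ≠ ⊤ := ne_top_of_le_ne_top hfin (Ideal.height_mono (hQP s))
  obtain ⟨s, -, hs⟩ := exists_minimalFor_of_wellFoundedLT (fun _ : Finset σ ↦ True)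
    (fun s ↦ P.height.toNat - (Q s).height.toNat) ⟨∅, trivial⟩
  refine ⟨s, le_antisymm (hQP s) fun x hx ↦ ?_⟩
  obtain ⟨t, y, rfl⟩ := exists_finset_rename x
  have hy : rename (↑) y ∈ Q (s ∪ t) :=
    hmono Finset.subset_union_right (Ideal.mem_map_of_mem _ hx)
  change _ ∈ Q s
  rcases (hmono (Finset.subset_union_left (s₁ := s) (s₂ := t))).eq_or_lt with h | h
  · rwa [h]
  · have hlt : (Q s).height < (Q (s ∪ t)).height := by
      have : (Q s).FiniteHeight := ⟨.inr (hne s)⟩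
      exact Ideal.height_strict_mono_of_isPrime h
    have hltNat : (Q s).height.toNat < (Q (s ∪ t)).height.toNat := by
      rwa [← Nat.cast_lt (α := ℕ∞), ENat.natCast_toNat (hne _), ENat.natCast_toNat (hne _)]
    have hle := ENat.toNat_le_toNat (Ideal.height_mono (hQP (s ∪ t))) hfin
    have := hs (j := s ∪ t) trivial
    simp only at this
    omega

lemma fg_of_height_ne_top [IsNoetherianRing R] {P : Ideal (MvPolynomial σ R)} (hP : P.IsPrime)
    (hfin : P.height ≠ ⊤) : P.FG := by
  obtain ⟨s, hs⟩ := exists_finset_map_comap_rename_eq hP hfin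
  rw [← hs]
  exact (Ideal.fg_of_isNoetherianRing _).map (rename (R := R) ((↑) : s → σ)).toRingHom

lemma isNoetherianRing_localization_of_height_ne_top [IsNoetherianRing R]
    (P : Ideal (MvPolynomial σ R)) [P.IsPrime] (hfin : P.height ≠ ⊤) :
    IsNoetherianRing (Localization.AtPrime P) := by
  refine .of_prime fun I hI ↦ ?_
  rw [← IsLocalization.map_under P.primeCompl _ I]
  refine (fg_of_height_ne_top (hI.under _) (ne_top_of_le_ne_top hfin (Ideal.height_mono ?_))).map _
  exact ((IsLocalization.AtPrime.orderIsoOfPrime (Localization.AtPrime P) P) ⟨I, hI⟩).2.2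

lemma isRegularLocalRing_localization_of_height_ne_top [IsRegularRing R]
    (P : Ideal (MvPolynomial σ R)) [hP : P.IsPrime] (hfin : P.height ≠ ⊤) :
    IsRegularLocalRing (Localization.AtPrime P) := by
  have := isNoetherianRing_localization_of_height_ne_top P hfin
  obtain ⟨s, hs⟩ := exists_finset_map_comap_rename_eq hP hfin
  set p := P.comap (rename (R := R) ((↑) : s → σ)) with hp
  have : p.IsPrime := hP.comap _
  have reg := IsRegularRing.isRegularLocalRing_localization p
  let φ := Localization.localRingHom p P (rename (R := R) ((↑) : s → σ)).toRingHom hp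
  have hcomp : φ.comp (algebraMap _ _) =
      (algebraMap _ (Localization.AtPrime P)).comp (rename (R := R) ((↑) : s → σ)).toRingHom :=
    RingHom.ext fun x ↦ Localization.localRingHom_to_map p P _ hp x
  have hφ : (IsLocalRing.maximalIdeal (Localization.AtPrime p)).map φ =
      IsLocalRing.maximalIdeal (Localization.AtPrime P) := by
    rw [← Localization.AtPrime.map_eq_maximalIdeal, ← Localization.AtPrime.map_eq_maximalIdeal,
      Ideal.map_map, hcomp, ← Ideal.map_map]
    exact congr_arg _ hs
  have hfg := (IsLocalRing.maximalIdeal (Localization.AtPrime p)).fg_of_isNoetherianRing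
  have hg := Submodule.FG.finite_generators hfg
  apply IsRegularLocalRing.of_spanFinrank_maximalIdeal_le
  calc ((IsLocalRing.maximalIdeal (Localization.AtPrime P)).spanFinrank : WithBot ℕ∞)
      ≤ (IsLocalRing.maximalIdeal (Localization.AtPrime p)).spanFinrank := by
        rw [← hφ, ← Submodule.FG.generators_ncard hfg]
        nth_rw 1 [← Submodule.span_generators (IsLocalRing.maximalIdeal (Localization.AtPrime p))]
        rw [← Ideal.span, Ideal.map_span, Nat.cast_le]
        exact (Submodule.spanFinrank_span_le_ncard_of_finite (hg.image _)).trans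
          (Set.ncard_image_le hg)
    _ = p.height := by
        rw [reg.spanFinrank_maximalIdeal, IsLocalization.AtPrime.ringKrullDim_eq_height p]
    _ ≤ P.height := by
        have := height_le_height_map_rename (R := R) (Subtype.val_injective (p := (· ∈ s))) p
        rw [hs] at this
        exact WithBot.coe_le_coe.mpr this
    _ = _ := (IsLocalization.AtPrime.ringKrullDim_eq_height P _).symm

end MvPolynomial

/-- Let `A = ℂ[X₁, X₂, …] = MvPolynomial ℕ ℂ` and let `𝔭`
be a prime ideal of finite height. Then the localization `A_𝔭` is a regular
local ring (a Noetherian local ring whose maximal ideal is generated by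
`Krull dimension` many elements); in particular it is Noetherian. -/
theorem localization_at_finite_height_prime_is_regular_local
    (𝔭 : Ideal (MvPolynomial ℕ ℂ)) (hp : 𝔭.IsPrime)
    (hfin : Order.height (⟨𝔭, hp⟩ : PrimeSpectrum (MvPolynomial ℕ ℂ)) ≠ ⊤) :
    IsNoetherianRing (Localization.AtPrime 𝔭) ∧
    ∃ s : Finset (Localization.AtPrime 𝔭),
      Ideal.span (s : Set (Localization.AtPrime 𝔭)) =
        IsLocalRing.maximalIdeal (Localization.AtPrime 𝔭) ∧
      (s.card : WithBot ℕ∞) = ringKrullDim (Localization.AtPrime 𝔭) := by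
  rw [← PrimeSpectrum.height_eq_orderHeight] at hfin
  have reg := MvPolynomial.isRegularLocalRing_localization_of_height_ne_top 𝔭 hfin
  have hfg := (IsLocalRing.maximalIdeal (Localization.AtPrime 𝔭)).fg_of_isNoetherianRing
  have hg := Submodule.FG.finite_generators hfg
  refine ⟨inferInstance, hg.toFinset, ?_, ?_⟩
  · rw [hg.coe_toFinset]
    exact Submodule.span_generators _
  · rw [← Set.ncard_eq_toFinset_card _ hg, Submodule.FG.generators_ncard hfg,
      reg.spanFinrank_maximalIdeal]
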